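/- With the construction in the context (in particular 1_G ∈ S and S ≠ S⁻¹, and k = 2 if n > 3, k = 3 if n = 3), suppose φ is a graph automorphism of X̂ fixing the vertex 1_Ĝ, that nk ≠ |G|, and that |S| ≤ (|G| + 1)/k. Then φ maps each coset of G in Ĝ to a coset of G, and φ maps each coset of AB in Ĝ to a coset of AB. -/

import Mathlib

/-!
Write a vertex as `(g, a, i)` and call `i ∈ B` its layer. Adjacent vertices agree in `g` or in `a`,
so every clique lies in a coset of `AB` or in a coset of `GB` (`clique_dichotomy`), and the layers
it meets are pairwise consecutive, so there are at most `k` of them (`card_layers_le`).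

* In a coset of `AB`, cliques have at most `nk` vertices, and taking all vertices in `k` pairwise
  consecutive layers gives a clique of exactly that size (`blockClique`).
* A clique in a coset of `GB` either lies in one coset of `G`, or it meets at least two layers. In
  the latter case two consecutive layers `X`, `Y` satisfy `Y * X⁻¹ ⊆ S`, so each has at most `|S|`
  vertices. If `|X| = |S|`, then `Y` lies in a right coset of the stabilizer of `S`, and since `S`
  is not a subgroup (`S ≠ S⁻¹`) this gives `2|Y| ≤ |S|` (`two_mul_card_le_of_card_eq`). Together with
  `k|S| ≤ |G| + 1`, this bounds the clique by `|G|`, and by `|G| - 1` if `|S| ≥ 3` or if the clique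
  has at most one vertex in each coset of `AB` (`card_clique_GB`).

If `|G| < nk`, the image of a block clique has more than `|G|` vertices, hence lies in a coset of
`AB`; as blocks overlap, cosets of `AB` are preserved. The image of a coset of `G` is then a clique
with at most one vertex in each coset of `AB`, and the bound above leaves it only one layer.

If `|G| > nk`, the image of a coset of `G` is a clique of size `|G|`, which is too large for a coset
of `AB` and for a clique with two layers, so cosets of `G` are preserved. The image of a block
clique then has at most one vertex in each coset of `G`, so in a coset of `GB` it would have at most
`k < nk` vertices; hence it lies in a coset of `AB`.

Both arguments apply to `φ⁻¹` as well, which turns inclusions between cosets into equalities.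
-/

open scoped Pointwise

/-- Edge relation of the Cayley digraph `Cay⃗(G;S)`: there is a directed edge from
`g` to `h` iff `h ∈ Sg`, i.e. iff `h * g⁻¹ ∈ S`. -/
def cayleyRel {G : Type*} [Group G] (S : Set G) : G → G → Prop :=
  fun g h => h * g⁻¹ ∈ S

section Construction

variable {G A B : Type*} [Group G] [Group A] [Group B]

/-- The subgroup `G` of `Ĝ = G × A × B` (as a subset). -/
def Gset (G A B : Type*) [Group G] [Group A] [Group B] : Set (G × A × B) :=
  {z | z.2.1 = 1 ∧ z.2.2 = 1}

/-- The subgroup `A` of `Ĝ = G × A × B` (as a subset). -/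
def Aset (G A B : Type*) [Group G] [Group A] [Group B] : Set (G × A × B) :=
  {z | z.1 = 1 ∧ z.2.2 = 1}

/-- The coset `Ab` in `Ĝ = G × A × B` (as a subset). -/
def Abset (G A : Type*) {B : Type*} [Group G] [Group A] [Group B] (b : B) :
    Set (G × A × B) :=
  {z | z.1 = 1 ∧ z.2.2 = b}

/-- The coset `Gb` in `Ĝ = G × A × B` (as a subset). -/
def Gbset (G A : Type*) {B : Type*} [Group G] [Group A] [Group B] (b : B) :
    Set (G × A × B) :=
  {z | z.2.1 = 1 ∧ z.2.2 = b}

/-- The coset `Sb` in `Ĝ = G × A × B` (as a subset), for `S ⊆ G`. -/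
def Sbset (A : Type*) {G B : Type*} [Group G] [Group A] [Group B]
    (S : Set G) (b : B) : Set (G × A × B) :=
  {z | z.1 ∈ S ∧ z.2.1 = 1 ∧ z.2.2 = b}

/-- The subgroup `AB` of `Ĝ = G × A × B` (as a subset). -/
def ABset (G A B : Type*) [Group G] [Group A] [Group B] : Set (G × A × B) :=
  {z | z.1 = 1}

/-- The subgroup `GB` of `Ĝ = G × A × B` (as a subset). -/
def GBset (G A B : Type*) [Group G] [Group A] [Group B] : Set (G × A × B) :=
  {z | z.2.1 = 1}

/-- The connection set `Ŝ = G ∪ Sb ∪ A ∪ Ab` of `Ĝ = G × A × B`. -/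
def Shat {G A B : Type*} [Group G] [Group A] [Group B] (S : Set G) (b : B) :
    Set (G × A × B) :=
  Gset G A B ∪ Sbset A S b ∪ Aset G A B ∪ Abset G A b

/-- The (symmetric) adjacency relation of the Cayley graph
`X̂ = Cay(Ĝ; Ŝ ∪ Ŝ⁻¹)`, where `Ĝ = G × A × B`. -/
def hatAdj {G A B : Type*} [Group G] [Group A] [Group B] (S : Set G) (b : B) :
    G × A × B → G × A × B → Prop :=
  fun x y => y * x⁻¹ ∈ Shat S b ∪ (Shat S b)⁻¹

end Construction

/-- A clique of a graph: a set of pairwise adjacent vertices. -/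
def IsClique {V : Type*} (adj : V → V → Prop) (C : Set V) : Prop :=
  ∀ x ∈ C, ∀ y ∈ C, x ≠ y → adj x y

/-- A maximal clique of a graph: a clique not properly contained in any clique. -/
def IsMaxClique {V : Type*} (adj : V → V → Prop) (C : Set V) : Prop :=
  IsClique adj C ∧ ∀ D : Set V, IsClique adj D → C ⊆ D → D = C

section Bounds

variable {G A B : Type*} [Group G] [Group A] [Group B]

/-! ### Products `Y * X⁻¹` contained in `S` -/

/-- If `Y * X⁻¹ ⊆ S` with `|X| = |S|`, then `S = y X⁻¹` for every `y ∈ Y`, so `Y y₀⁻¹` lies in the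
left stabilizer `H` of `S`. As `1 ∈ S` and `S ≠ S⁻¹` is not a subgroup, `S` contains at least two
right cosets of `H`. -/
lemma two_mul_card_le_of_card_eq [Finite G] {S : Set G} (hS1 : (1 : G) ∈ S) (hSsym : S ≠ S⁻¹)
    {X Y : Finset G} (hY : Y.Nonempty) (h : ∀ x ∈ X, ∀ y ∈ Y, y * x⁻¹ ∈ S)
    (hX : X.card = S.ncard) : 2 * Y.card ≤ S.ncard := by
  classical
  have hS : ∀ y ∈ Y, (fun x => y * x⁻¹) '' (X : Set G) = S := by
    intro y hy
    apply Set.eq_of_subset_of_ncard_le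
    · rintro _ ⟨x, hx, rfl⟩
      exact h x hx y hy
    · rw [Set.ncard_image_of_injective _ (fun x y h => by simpa using h), Set.ncard_coe_finset, hX]
    · exact Set.toFinite _
  obtain ⟨y₀, hy₀⟩ := hY
  set H := MulAction.stabilizer G S with hH
  have hmem : ∀ g ∈ H, ∀ s ∈ S, g * s ∈ S := fun g hg s hs =>
    ((MulAction.mem_stabilizer_set).1 hg s).2 hs
  have hHS : (H : Set G) ⊆ S := fun g hg => by simpa using hmem g hg 1 hS1
  have hYH : ∀ y ∈ Y, y * y₀⁻¹ ∈ H := by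
    intro y hy
    rw [hH, MulAction.mem_stabilizer_set' (Set.toFinite S)]
    intro s hs
    rw [← hS y₀ hy₀] at hs
    obtain ⟨x, hx, rfl⟩ := hs
    have := h x hx y hy
    simpa [mul_assoc] using this
  have hcard : Y.card ≤ (H : Set G).ncard := by
    rw [← Set.ncard_coe_finset]
    exact Set.ncard_le_ncard_of_injOn (fun y => y * y₀⁻¹) (fun y hy => hYH y hy)
      (fun a _ b _ hab => by simpa using hab) (Set.toFinite _)
  obtain ⟨s, hs, hsH⟩ : ∃ s ∈ S, s ∉ H := by
    by_contra! hcon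
    have : S = H := Set.Subset.antisymm hcon hHS
    exact hSsym (by rw [this, inv_coe_set])
  have hdisj : Disjoint (H : Set G) ((fun g => g * s) '' (H : Set G)) := by
    rw [Set.disjoint_left]
    rintro _ h1 ⟨g, hg, rfl⟩
    exact hsH ((H.mul_mem_cancel_left hg).1 h1)
  have hsub : (H : Set G) ∪ (fun g => g * s) '' (H : Set G) ⊆ S := by
    apply Set.union_subset hHS
    rintro _ ⟨g, hg, rfl⟩
    exact hmem g hg s hs
  have := Set.ncard_le_ncard hsub (Set.toFinite _)
  rw [Set.ncard_union_eq hdisj (Set.toFinite _) (Set.toFinite _),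
    Set.ncard_image_of_injective _ (mul_left_injective s)] at this
  omega

lemma card_right_le [Finite G] {S : Set G} {X Y : Finset G} (hX : X.Nonempty)
    (h : ∀ x ∈ X, ∀ y ∈ Y, y * x⁻¹ ∈ S) : Y.card ≤ S.ncard := by
  obtain ⟨x, hx⟩ := hX
  rw [← Set.ncard_coe_finset]
  exact Set.ncard_le_ncard_of_injOn (fun y => y * x⁻¹) (fun y hy => h x hx y hy)
    (fun a _ b _ hab => by simpa using hab) (Set.toFinite _)

lemma card_left_le [Finite G] {S : Set G} {X Y : Finset G} (hY : Y.Nonempty)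
    (h : ∀ x ∈ X, ∀ y ∈ Y, y * x⁻¹ ∈ S) : X.card ≤ S.ncard := by
  obtain ⟨y, hy⟩ := hY
  rw [← Set.ncard_coe_finset]
  exact Set.ncard_le_ncard_of_injOn (fun x => y * x⁻¹) (fun x hx => h x hx y hy)
    (fun a _ b _ hab => by simpa using hab) (Set.toFinite _)

/-- Size bounds for two consecutive layers `X`, `Y` of a clique in a coset of `GB`. -/
lemma pair_bounds [Finite G] {S : Set G} (hS1 : (1 : G) ∈ S) (hSsym : S ≠ S⁻¹)
    {X Y : Finset G} (hX : X.Nonempty) (hY : Y.Nonempty)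
    (h : ∀ x ∈ X, ∀ y ∈ Y, y * x⁻¹ ∈ S) :
    X.card ≤ S.ncard ∧ Y.card ≤ S.ncard ∧ X.card + Y.card + 1 ≤ 2 * S.ncard ∧
      (3 ≤ S.ncard → X.card + Y.card + 2 ≤ 2 * S.ncard) := by
  have hXS := card_left_le hY h
  have hYS := card_right_le hX h
  have e1 := fun hc => two_mul_card_le_of_card_eq hS1 hSsym hY h hc
  have hSinv : (S⁻¹).ncard = S.ncard := by
    rw [← Set.image_inv_eq_inv, Set.ncard_image_of_injective _ inv_injective]
  -- Inverting everything exchanges the roles of `X` and `Y`.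
  have e2 : Y.card = S.ncard → 2 * X.card ≤ S.ncard := by
    intro hc
    rw [← hSinv] at hc ⊢
    refine two_mul_card_le_of_card_eq (S := S⁻¹) (by simpa using hS1) ?_ hX ?_ hc
    · rw [inv_inv]; exact hSsym.symm
    · intro y hy x hx
      simpa using h x hx y hy
  have := hX.card_pos
  have := hY.card_pos
  refine ⟨hXS, hYS, ?_, ?_⟩ <;> by_cases c1 : X.card = S.ncard <;>
    by_cases c2 : Y.card = S.ncard <;> grind

/-- If `X` and `Y` are disjoint then `1 ∉ Y * X⁻¹`, which improves the bounds by one. -/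
lemma pair_bounds_disjoint [Finite G] {S : Set G} (hS1 : (1 : G) ∈ S)
    {X Y : Finset G} (hX : X.Nonempty) (hY : Y.Nonempty)
    (h : ∀ x ∈ X, ∀ y ∈ Y, y * x⁻¹ ∈ S) (hd : ∀ x ∈ X, x ∉ Y) :
    X.card + 1 ≤ S.ncard ∧ Y.card + 1 ≤ S.ncard := by
  have h' : ∀ x ∈ X, ∀ y ∈ Y, y * x⁻¹ ∈ S \ {1} := by
    intro x hx y hy
    refine ⟨h x hx y hy, fun h1 => hd x hx ?_⟩
    rwa [← mul_inv_eq_one.1 h1]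
  have hc := Set.ncard_sdiff_singleton_add_one hS1 (Set.toFinite _)
  have := card_left_le hY h'
  have := card_right_le hX h'
  omega

/-! ### Cliques and their layers -/

lemma hatAdj_iff {S : Set G} {b : B} {x y : G × A × B} :
    hatAdj S b x y ↔
      (x.2.1 = y.2.1 ∧ (x.2.2 = y.2.2 ∨ (y.2.2 = b * x.2.2 ∧ y.1 * x.1⁻¹ ∈ S) ∨
        (x.2.2 = b * y.2.2 ∧ x.1 * y.1⁻¹ ∈ S))) ∨
      (x.1 = y.1 ∧ (x.2.2 = y.2.2 ∨ y.2.2 = b * x.2.2 ∨ x.2.2 = b * y.2.2)) := by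
  obtain ⟨g, a, c⟩ := x
  obtain ⟨g', a', c'⟩ := y
  have e1 : a' * a⁻¹ = 1 ↔ a = a' := by rw [mul_inv_eq_one, eq_comm]
  have e2 : c' * c⁻¹ = 1 ↔ c = c' := by rw [mul_inv_eq_one, eq_comm]
  have e3 : g' * g⁻¹ = 1 ↔ g = g' := by rw [mul_inv_eq_one, eq_comm]
  have e4 : a * a'⁻¹ = 1 ↔ a = a' := by rw [mul_inv_eq_one]
  have e5 : c * c'⁻¹ = 1 ↔ c = c' := by rw [mul_inv_eq_one]
  have e6 : g * g'⁻¹ = 1 ↔ g = g' := by rw [mul_inv_eq_one]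
  have e7 : c' * c⁻¹ = b ↔ c' = b * c := mul_inv_eq_iff_eq_mul
  have e8 : c * c'⁻¹ = b ↔ c = b * c' := mul_inv_eq_iff_eq_mul
  simp only [hatAdj, Shat, Gset, Sbset, Aset, Abset, Set.mem_union, Set.mem_inv, Set.mem_ofPred_eq,
    Prod.fst_mul, Prod.snd_mul, Prod.fst_inv, Prod.snd_inv, mul_inv_rev, inv_inv,
    e1, e2, e3, e4, e5, e6, e7, e8]
  clear e1 e2 e3 e4 e5 e6 e7 e8
  generalize (a = a') = P1, (c = c') = P2, (g = g') = P3, (c' = b * c) = P4, (c = b * c') = P5,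
    (g' * g⁻¹ ∈ S) = P6, (g * g'⁻¹ ∈ S) = P7
  by_cases P1 <;> by_cases P2 <;> by_cases P3 <;> by_cases P4 <;> simp_all [and_comm]

/-- A clique lies in a coset of `AB` or in a coset of `GB`. -/
lemma clique_dichotomy {S : Set G} {b : B} {D : Set (G × A × B)}
    (hD : IsClique (hatAdj S b) D) :
    (∀ x ∈ D, ∀ y ∈ D, x.1 = y.1) ∨ (∀ x ∈ D, ∀ y ∈ D, x.2.1 = y.2.1) := by
  have key : ∀ x ∈ D, ∀ y ∈ D, x.1 = y.1 ∨ x.2.1 = y.2.1 := by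
    intro x hx y hy
    by_cases hxy : x = y
    · simp [hxy]
    · have := hatAdj_iff.1 (hD x hx y hy hxy)
      tauto
  by_contra! hcon
  obtain ⟨⟨x, hx, y, hy, hxy⟩, ⟨z, hz, w, hw, hzw⟩⟩ := hcon
  have h1 := key x hx y hy
  have h2 := key z hz w hw
  have h3 := key x hx z hz
  have h4 := key x hx w hw
  have h5 := key y hy z hz
  have h6 := key y hy w hw
  grind

/-- Two distinct layers of a clique are consecutive. -/
lemma layers_consecutive {S : Set G} {b : B} {D : Set (G × A × B)}
    (hD : IsClique (hatAdj S b) D) {x y : G × A × B} (hx : x ∈ D) (hy : y ∈ D)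
    (hxy : x.2.2 ≠ y.2.2) : y.2.2 = b * x.2.2 ∨ x.2.2 = b * y.2.2 := by
  have := hatAdj_iff.1 (hD x hx y hy (fun h => hxy (by rw [h])))
  tauto

/-- Bounds for a clique in a coset of `GB` that meets at least two cosets of `G`, where a clique
meets at most `k` layers. -/
lemma card_clique_GB [Finite G] {S : Set G} (hS1 : (1 : G) ∈ S) (hSsym : S ≠ S⁻¹) {b : B}
    (hbb : b * b ≠ 1) {k : ℕ}
    (hlayer : ∀ I : Finset B, (∀ p ∈ I, ∀ q ∈ I, p ≠ q → q = b * p ∨ p = b * q) → I.card ≤ k)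
    (D : Finset (G × A × B)) (hD : IsClique (hatAdj S b) (D : Set (G × A × B)))
    (ha : ∀ x ∈ D, ∀ y ∈ D, x.2.1 = y.2.1) {u v : G × A × B} (hu : u ∈ D) (hv : v ∈ D)
    (huv : u.2.2 ≠ v.2.2) :
    D.card + 1 ≤ k * S.ncard ∧ (3 ≤ S.ncard → D.card + 2 ≤ k * S.ncard) ∧
      ((∀ x ∈ D, ∀ y ∈ D, x.1 = y.1 → x = y) → D.card + k ≤ k * S.ncard) := by
  classical
  set I : Finset B := D.image (fun z => z.2.2) with hI
  set X : B → Finset G := fun p => (D.filter (fun z => z.2.2 = p)).image (fun z => z.1) with hXdef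
  have hXmem : ∀ p g, g ∈ X p ↔ ∃ z ∈ D, z.2.2 = p ∧ z.1 = g := by
    intro p g
    simp only [hXdef, Finset.mem_image, Finset.mem_filter, and_assoc]
  have hsum : D.card = ∑ p ∈ I, (X p).card := by
    rw [Finset.card_eq_sum_card_image (fun z => z.2.2) D]
    refine Finset.sum_congr rfl fun p _ => ?_
    rw [hXdef, Finset.card_image_of_injOn]
    intro x hx y hy hxy
    simp only [Finset.coe_filter, Set.mem_ofPred_eq] at hx hy
    exact Prod.ext hxy (Prod.ext (ha x hx.1 y hy.1) (hx.2.trans hy.2.symm))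
  have hne : ∀ p ∈ I, (X p).Nonempty := by
    intro p hp
    obtain ⟨z, hz, hzp⟩ := Finset.mem_image.1 hp
    exact ⟨z.1, (hXmem _ _).2 ⟨z, hz, hzp, rfl⟩⟩
  have hcons : ∀ p ∈ I, ∀ q ∈ I, p ≠ q → q = b * p ∨ p = b * q := by
    intro p hp q hq hpq
    obtain ⟨z, hz, rfl⟩ := Finset.mem_image.1 hp
    obtain ⟨w, hw, rfl⟩ := Finset.mem_image.1 hq
    exact layers_consecutive hD hz hw hpq
  have hIk : I.card ≤ k := hlayer I hcons
  have hb1 : b ≠ 1 := by rintro rfl; simp at hbb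
  have hprod : ∀ p, ∀ x ∈ X p, ∀ y ∈ X (b * p), y * x⁻¹ ∈ S := by
    intro p x hx y hy
    obtain ⟨z, hz, hzp, rfl⟩ := (hXmem _ _).1 hx
    obtain ⟨w, hw, hwp, rfl⟩ := (hXmem _ _).1 hy
    have hzw : z.2.2 ≠ w.2.2 := by rw [hzp, hwp]; simpa using hb1
    -- Since `b * b ≠ 1`, the edge between the two layers can only run from `z` to `w`.
    have hnot : ¬ z.2.2 = b * w.2.2 := by
      rw [hzp, hwp, ← mul_assoc]
      simpa using hbb
    rcases hatAdj_iff.1 (hD z hz w hw (fun h => hzw (by rw [h]))) with h | h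
    · tauto
    · rw [h.1]; simpa using hS1
  have hpair : ∀ p ∈ I, ∀ q ∈ I, p ≠ q → (X p).card ≤ S.ncard ∧
      (X p).card + (X q).card + 1 ≤ 2 * S.ncard ∧
      (3 ≤ S.ncard → (X p).card + (X q).card + 2 ≤ 2 * S.ncard) := by
    intro p hp q hq hpq
    rcases hcons p hp q hq hpq with rfl | rfl
    · have := pair_bounds hS1 hSsym (hne _ hp) (hne _ hq) (hprod p)
      omega
    · have := pair_bounds hS1 hSsym (hne _ hq) (hne _ hp) (hprod q)
      omega
  have huI : u.2.2 ∈ I := Finset.mem_image_of_mem _ hu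
  have hvI : v.2.2 ∈ I := Finset.mem_image_of_mem _ hv
  have hother : ∀ p ∈ I, ∃ q ∈ I, p ≠ q := by
    intro p hp
    by_cases h : p = u.2.2
    · exact ⟨_, hvI, h ▸ huv⟩
    · exact ⟨_, huI, h⟩
  have hle : ∀ p ∈ I, (X p).card ≤ S.ncard := by
    intro p hp
    obtain ⟨q, hq, hpq⟩ := hother p hp
    exact (hpair p hp q hq hpq).1
  have hvI' : v.2.2 ∈ I.erase u.2.2 := Finset.mem_erase.2 ⟨huv.symm, hvI⟩
  have hsplit : D.card = (X u.2.2).card + ((X v.2.2).card +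
      ∑ p ∈ (I.erase u.2.2).erase v.2.2, (X p).card) := by
    rw [hsum, ← Finset.add_sum_erase I _ huI, ← Finset.add_sum_erase _ _ hvI']
  have hrest : ∑ p ∈ (I.erase u.2.2).erase v.2.2, (X p).card ≤ (I.card - 2) * S.ncard := by
    have := Finset.sum_le_card_nsmul ((I.erase u.2.2).erase v.2.2) (fun p => (X p).card) S.ncard
      (fun p hp => hle p (Finset.mem_of_mem_erase (Finset.mem_of_mem_erase hp)))
    rwa [Finset.card_erase_of_mem hvI', Finset.card_erase_of_mem huI, smul_eq_mul,
      Nat.sub_sub] at this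
  have hI2 : 2 ≤ I.card := Finset.one_lt_card.2 ⟨_, huI, _, hvI, huv⟩
  have hmul : (I.card - 2) * S.ncard + 2 * S.ncard ≤ k * S.ncard := by
    rw [← add_mul]
    exact Nat.mul_le_mul_right _ (by omega)
  have hp := hpair _ huI _ hvI huv
  refine ⟨by omega, fun h3 => ?_, fun hinj => ?_⟩
  · have := hp.2.2 h3
    omega
  · have hle' : ∀ p ∈ I, (X p).card ≤ S.ncard - 1 := by
      intro p hp
      obtain ⟨q, hq, hpq⟩ := hother p hp
      have hdisj : ∀ p q, p ≠ q → ∀ x ∈ X p, x ∉ X q := by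
        intro p q hpq x hx hx'
        obtain ⟨z, hz, hzp, rfl⟩ := (hXmem _ _).1 hx
        obtain ⟨w, hw, hwp, hwz⟩ := (hXmem _ _).1 hx'
        have := hinj w hw z hz hwz
        exact hpq (by rw [← hzp, ← hwp, this])
      rcases hcons p hp q hq hpq with rfl | rfl
      · have := pair_bounds_disjoint hS1 (hne _ hp) (hne _ hq) (hprod p) (hdisj _ _ hpq)
        omega
      · have := pair_bounds_disjoint hS1 (hne _ hq) (hne _ hp) (hprod q) (hdisj _ _ hpq.symm)
        omega
    have h1 := Finset.sum_le_card_nsmul I (fun p => (X p).card) _ hle'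
    rw [← hsum, smul_eq_mul] at h1
    have h2 : I.card * (S.ncard - 1) ≤ k * (S.ncard - 1) := Nat.mul_le_mul_right _ hIk
    have h3 : 1 ≤ S.ncard := (Set.ncard_pos (Set.toFinite _)).2 ⟨1, hS1⟩
    obtain ⟨m, hm⟩ := Nat.exists_eq_add_of_le' h3
    rw [hm] at h1 h2 ⊢
    simp only [Nat.add_sub_cancel, mul_add, mul_one] at h1 h2 ⊢
    omega

/-- A set of pairwise consecutive layers has at most `k` elements. -/
lemma card_layers_le {b : B} {n k : ℕ} (hn : 3 ≤ n) (hk : k = if 3 < n then 2 else 3)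
    (hb : orderOf b = n) (hB : Nat.card B = n) (I : Finset B)
    (hI : ∀ p ∈ I, ∀ q ∈ I, p ≠ q → q = b * p ∨ p = b * q) : I.card ≤ k := by
  classical
  split_ifs at hk with h3
  · subst hk
    by_contra! hcon
    obtain ⟨p, hp, q, hq, r, hr, hpq, hpr, hqr⟩ := Finset.two_lt_card.1 hcon
    have hb3 : ∀ x : B, x ≠ b * (b * (b * x)) := by
      intro x hx
      have hb3 : b ^ 3 = 1 := by
        have : (b * b * b) * x = 1 * x := by rw [one_mul]; simpa [mul_assoc] using hx.symm
        have := mul_right_cancel this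
        rw [pow_succ, pow_two, this]
      have := orderOf_le_of_pow_eq_one (by norm_num) hb3
      omega
    rcases hI p hp q hq hpq with h1 | h1 <;> rcases hI p hp r hr hpr with h2 | h2 <;>
      rcases hI q hq r hr hqr with h4 | h4 <;>
      grind [mul_right_inj]
  · have : Finite B := Nat.finite_of_card_ne_zero (by omega)
    have : Fintype B := Fintype.ofFinite B
    rw [hk, ← (show n = 3 by omega), ← hB, Nat.card_eq_fintype_card]
    exact Finset.card_le_univ I

/-- Any two consecutive layers belong to a set of exactly `k` pairwise consecutive layers. -/
lemma exists_layers {b : B} {n k : ℕ} (hn : 3 ≤ n) (hk : k = if 3 < n then 2 else 3)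
    (hb : orderOf b = n) (hB : Nat.card B = n) (hBgen : ∀ y : B, y ∈ Subgroup.zpowers b) (i : B) :
    ∃ J : Finset B, i ∈ J ∧ b * i ∈ J ∧ J.card = k ∧
      ∀ p ∈ J, ∀ q ∈ J, p ≠ q → q = b * p ∨ p = b * q := by
  classical
  have hb1 : b ≠ 1 := by
    rintro rfl
    simp at hb
    omega
  split_ifs at hk with h3
  · refine ⟨{i, b * i}, by simp, by simp, ?_, ?_⟩
    · rw [Finset.card_pair (by simpa using hb1), hk]
    · intro p hp q hq hpq
      simp only [Finset.mem_insert, Finset.mem_singleton] at hp hq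
      grind
  · have : Finite B := Nat.finite_of_card_ne_zero (by omega)
    have : Fintype B := Fintype.ofFinite B
    have hn3 : n = 3 := by omega
    refine ⟨Finset.univ, by simp, by simp, ?_, ?_⟩
    · rw [Finset.card_univ, ← Nat.card_eq_fintype_card, hB, hn3, hk]
    · intro p _ q _ hpq
      have hb3 : b ^ 3 = 1 := by rw [← hn3, ← hb, pow_orderOf_eq_one]
      obtain ⟨m, hm⟩ := Subgroup.mem_zpowers_iff.1 (hBgen (q * p⁻¹))
      have hq : q = b ^ m * p := by rw [hm]; simp
      rw [← zpow_mod_orderOf, hb, hn3] at hq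
      have h0 : 0 ≤ m % (3 : ℕ) := Int.emod_nonneg _ (by norm_num)
      have h1 : m % (3 : ℕ) < 3 := Int.emod_lt_of_pos _ (by norm_num)
      generalize m % (3 : ℕ) = r at hq h0 h1
      interval_cases r
      · exact absurd (by simpa using hq.symm) hpq
      · left; simpa using hq
      · right
        have : b ^ 3 * p = b * (b ^ (2 : ℤ) * p) := by
          rw [← mul_assoc]; norm_cast; rw [pow_succ']
        rw [hq, ← this, hb3, one_mul]

end Bounds

section Automorphism

variable {G A B : Type*} [Group G] [Group A] [Group B]

/-! ### Images of cliques under automorphisms -/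

lemma Gset_mul_singleton (x : G × A × B) : Gset G A B * {x} = {z | z.2 = x.2} := by
  ext z
  simp only [Set.mul_singleton, Set.mem_image, Gset, Set.mem_ofPred_eq]
  constructor
  · rintro ⟨w, ⟨h1, h2⟩, rfl⟩
    simp [Prod.ext_iff, h1, h2]
  · intro h
    exact ⟨z * x⁻¹, by simp [h], by simp⟩

lemma ABset_mul_singleton (x : G × A × B) : ABset G A B * {x} = {z | z.1 = x.1} := by
  ext z
  simp only [Set.mul_singleton, Set.mem_image, ABset, Set.mem_ofPred_eq]
  constructor
  · rintro ⟨w, h1, rfl⟩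
    simp [h1]
  · intro h
    exact ⟨z * x⁻¹, by simp [h], by simp⟩

lemma isClique_image {S : Set G} {b : B} {φ : (G × A × B) ≃ (G × A × B)}
    (hφ : ∀ x y, hatAdj S b x y ↔ hatAdj S b (φ x) (φ y)) {C : Set (G × A × B)}
    (hC : IsClique (hatAdj S b) C) : IsClique (hatAdj S b) (φ '' C) := by
  rintro _ ⟨x, hx, rfl⟩ _ ⟨y, hy, rfl⟩ hxy
  exact (hφ x y).1 (hC x hx y hy (fun h => hxy (by rw [h])))

omit [Group G] [Group A] in
/-- A map constant in the first coordinate along consecutive layers of a coset of `AB` is constant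
in the first coordinate on the whole coset. -/
lemma fst_eq_of_step {b : B} [Finite B] (hBgen : ∀ y : B, y ∈ Subgroup.zpowers b)
    {f : G × A × B → G × A × B}
    (hstep : ∀ z w : G × A × B, z.1 = w.1 → (w.2.2 = z.2.2 ∨ w.2.2 = b * z.2.2) →
      (f z).1 = (f w).1) (z w : G × A × B) (h : z.1 = w.1) : (f z).1 = (f w).1 := by
  have key : ∀ m : ℕ, ∀ w : G × A × B, z.1 = w.1 → w.2.2 = b ^ m * z.2.2 →
      (f z).1 = (f w).1 := by
    intro m
    induction m with
    | zero => intro w h1 h2; exact hstep z w h1 (Or.inl (by simpa using h2))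
    | succ m ih =>
      intro w h1 h2
      rw [ih (w.1, w.2.1, b ^ m * z.2.2) h1 rfl]
      refine hstep _ w rfl (Or.inr ?_)
      rw [h2, pow_succ', mul_assoc]
  have hfin : IsOfFinOrder b := isOfFinOrder_of_finite b
  obtain ⟨m, hm⟩ := (hfin.mem_powers_iff_mem_zpowers).2 (hBgen (w.2.2 * z.2.2⁻¹))
  refine key m w h ?_
  simp only at hm
  rw [hm]
  simp

/-- The clique of all vertices of an `AB`-coset lying in the layers `J`. -/
def blockClique (A : Type*) {G B : Type*} [Fintype A] (g : G) (J : Finset B) :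
    Finset (G × A × B) :=
  {g} ×ˢ (Finset.univ ×ˢ J)

omit [Group G] [Group A] [Group B] in
lemma mem_blockClique [Fintype A] {g : G} {J : Finset B} {z : G × A × B} :
    z ∈ blockClique A g J ↔ z.1 = g ∧ z.2.2 ∈ J := by
  simp only [blockClique, Finset.mem_product, Finset.mem_singleton, Finset.mem_univ, true_and]

lemma isClique_blockClique [Fintype A] {S : Set G} {b : B} {g : G} {J : Finset B}
    (hJ : ∀ p ∈ J, ∀ q ∈ J, p ≠ q → q = b * p ∨ p = b * q) :
    IsClique (hatAdj S b) (blockClique A g J : Set (G × A × B)) := by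
  intro x hx y hy _
  rw [Finset.mem_coe, mem_blockClique] at hx hy
  have := hJ _ hx.2 _ hy.2
  refine hatAdj_iff.2 (Or.inr ⟨hx.1.trans hy.1.symm, ?_⟩)
  tauto

/-- The coset of `G` indexed by `p`, as a finset. -/
def cosetG (G : Type*) {A B : Type*} [Fintype G] (p : A × B) : Finset (G × A × B) :=
  Finset.univ ×ˢ {p}

omit [Group G] [Group A] [Group B] in
lemma mem_cosetG [Fintype G] {p : A × B} {z : G × A × B} : z ∈ cosetG G p ↔ z.2 = p := by
  simp only [cosetG, Finset.mem_product, Finset.mem_singleton, Finset.mem_univ, true_and]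

lemma isClique_cosetG [Fintype G] {S : Set G} {b : B} {p : A × B} :
    IsClique (hatAdj S b) (cosetG G p : Set (G × A × B)) := by
  intro x hx y hy _
  rw [Finset.mem_coe, mem_cosetG] at hx hy
  exact hatAdj_iff.2 (Or.inl ⟨by rw [hx, hy], Or.inl (by rw [hx, hy])⟩)

/-- The layers met by a clique are pairwise consecutive, so there are at most `k` of them. -/
lemma card_image_layers_le [DecidableEq B] {S : Set G} {b : B} {k : ℕ}
    (hlayer : ∀ I : Finset B, (∀ p ∈ I, ∀ q ∈ I, p ≠ q → q = b * p ∨ p = b * q) → I.card ≤ k)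
    {D : Finset (G × A × B)} (hD : IsClique (hatAdj S b) (D : Set (G × A × B))) :
    (D.image (fun z => z.2.2)).card ≤ k := by
  refine hlayer _ fun p hp q hq hpq => ?_
  obtain ⟨z, hz, rfl⟩ := Finset.mem_image.1 hp
  obtain ⟨w, hw, rfl⟩ := Finset.mem_image.1 hq
  exact layers_consecutive hD hz hw hpq

section Cases

variable [Fintype G] [Fintype A] [Finite B] {S : Set G} {b : B} {n k : ℕ}
  (hS1 : (1 : G) ∈ S) (hSsym : S ≠ S⁻¹) (hbb : b * b ≠ 1)
  (hBgen : ∀ y : B, y ∈ Subgroup.zpowers b) (hA : Fintype.card A = n)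
  (hlayer : ∀ I : Finset B, (∀ p ∈ I, ∀ q ∈ I, p ≠ q → q = b * p ∨ p = b * q) → I.card ≤ k)
  (hblock : ∀ i : B, ∃ J : Finset B, i ∈ J ∧ b * i ∈ J ∧ J.card = k ∧
      ∀ p ∈ J, ∀ q ∈ J, p ≠ q → q = b * p ∨ p = b * q)
  (hScard : k * S.ncard ≤ Fintype.card G + 1)

omit [Fintype G] in
include hBgen hA hblock in
/-- If no image of a block clique lies in a coset of `GB`, then cosets of `AB` are mapped into
cosets of `AB`. -/
lemma fst_of_blocks {φ : (G × A × B) ≃ (G × A × B)}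
    (hφ : ∀ x y, hatAdj S b x y ↔ hatAdj S b (φ x) (φ y))
    (hno : ∀ (g : G) (D : Finset (G × A × B)), IsClique (hatAdj S b) (D : Set (G × A × B)) →
      D.card = n * k → (∀ x ∈ D, (φ.symm x).1 = g) →
      ¬ ∀ x ∈ D, ∀ y ∈ D, x.2.1 = y.2.1)
    (z w : G × A × B) (h : z.1 = w.1) : (φ z).1 = (φ w).1 := by
  refine fst_eq_of_step hBgen (fun z w hzw hlay => ?_) z w h
  obtain ⟨J, hi, hbi, hJk, hJ⟩ := hblock z.2.2
  set D := (blockClique A z.1 J).map φ.toEmbedding with hDdef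
  have hDc : IsClique (hatAdj S b) (D : Set (G × A × B)) := by
    rw [hDdef, Finset.coe_map]
    exact isClique_image hφ (isClique_blockClique hJ)
  have hcard : D.card = n * k := by
    rw [hDdef, Finset.card_map, blockClique, Finset.card_product, Finset.card_product, hJk,
      Finset.card_univ, hA, Finset.card_singleton, one_mul]
  have hmem : ∀ x : G × A × B, x ∈ blockClique A z.1 J → φ x ∈ D := fun x hx =>
    Finset.mem_map_of_mem _ hx
  have hfst : ∀ x ∈ D, (φ.symm x).1 = z.1 := by
    intro x hx
    obtain ⟨y, hy, rfl⟩ := Finset.mem_map.1 hx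
    simpa using (mem_blockClique.1 hy).1
  rcases clique_dichotomy hDc with h1 | h1
  · refine h1 _ (hmem z (mem_blockClique.2 ⟨rfl, hi⟩)) _ (hmem w (mem_blockClique.2 ⟨hzw.symm, ?_⟩))
    rcases hlay with h | h <;> rw [h] <;> assumption
  · exact absurd h1 (hno z.1 D hDc hcard hfst)

omit [Fintype A] [Finite B] in
/-- If the image of a coset of `G` is a single point whenever it lies in a coset of `AB`, and meets
only one layer whenever it lies in a coset of `GB`, then cosets of `G` are mapped into cosets of `G`. -/
lemma snd_of_cosets {φ : (G × A × B) ≃ (G × A × B)}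
    (hφ : ∀ x y, hatAdj S b x y ↔ hatAdj S b (φ x) (φ y))
    (hno1 : ∀ (p : A × B) (D : Finset (G × A × B)), IsClique (hatAdj S b) (D : Set (G × A × B)) →
      D.card = Fintype.card G → (∀ x ∈ D, (φ.symm x).2 = p) →
      (∀ x ∈ D, ∀ y ∈ D, x.1 = y.1) → ∀ x ∈ D, ∀ y ∈ D, x = y)
    (hno2 : ∀ (p : A × B) (D : Finset (G × A × B)), IsClique (hatAdj S b) (D : Set (G × A × B)) →
      D.card = Fintype.card G → (∀ x ∈ D, (φ.symm x).2 = p) →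
      (∀ x ∈ D, ∀ y ∈ D, x.2.1 = y.2.1) → ∀ x ∈ D, ∀ y ∈ D, x.2.2 = y.2.2)
    (z w : G × A × B) (h : z.2 = w.2) : (φ z).2 = (φ w).2 := by
  set D := (cosetG G z.2).map φ.toEmbedding with hDdef
  have hDc : IsClique (hatAdj S b) (D : Set (G × A × B)) := by
    rw [hDdef, Finset.coe_map]
    exact isClique_image hφ isClique_cosetG
  have hcard : D.card = Fintype.card G := by
    rw [hDdef, Finset.card_map, cosetG, Finset.card_product, Finset.card_univ,
      Finset.card_singleton, mul_one]
  have hsnd : ∀ x ∈ D, (φ.symm x).2 = z.2 := by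
    intro x hx
    obtain ⟨y, hy, rfl⟩ := Finset.mem_map.1 hx
    simpa using mem_cosetG.1 hy
  have hz : φ z ∈ D := Finset.mem_map_of_mem _ (mem_cosetG.2 rfl)
  have hw : φ w ∈ D := Finset.mem_map_of_mem _ (mem_cosetG.2 h.symm)
  rcases clique_dichotomy hDc with h1 | h1
  · rw [hno1 _ D hDc hcard hsnd h1 _ hz _ hw]
  · exact Prod.ext (h1 _ hz _ hw) (hno2 _ D hDc hcard hsnd h1 _ hz _ hw)

include hS1 hSsym hbb hBgen hA hlayer hblock hScard in
/-- If `|G| < nk`, a clique of size `nk` is too large for a coset of `GB`. -/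
lemma fst_of_card_lt (hlt : Fintype.card G < n * k) {φ : (G × A × B) ≃ (G × A × B)}
    (hφ : ∀ x y, hatAdj S b x y ↔ hatAdj S b (φ x) (φ y))
    (z w : G × A × B) (h : z.1 = w.1) : (φ z).1 = (φ w).1 := by
  refine fst_of_blocks hBgen hA hblock hφ (fun g D hD hcard _ ha => ?_) z w h
  by_cases hmulti : ∃ u ∈ D, ∃ v ∈ D, u.2.2 ≠ v.2.2
  · obtain ⟨u, hu, v, hv, huv⟩ := hmulti
    have := (card_clique_GB hS1 hSsym hbb hlayer D hD ha hu hv huv).1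
    omega
  · push Not at hmulti
    have : D.card ≤ (Finset.univ : Finset G).card :=
      Finset.card_le_card_of_injOn (fun z => z.1) (fun _ _ => Finset.mem_univ _)
        (fun x hx y hy hxy => Prod.ext hxy (Prod.ext (ha x hx y hy) (hmulti x hx y hy)))
    rw [Finset.card_univ] at this
    omega

include hS1 hSsym hbb hBgen hA hlayer hblock hScard in
/-- If `|G| < nk`, the image of a coset of `G` meets each coset of `AB` at most once, and such
a clique of size `|G|` cannot meet two layers. -/
lemma snd_of_card_lt (hk : 2 ≤ k) (hlt : Fintype.card G < n * k)
    {φ : (G × A × B) ≃ (G × A × B)}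
    (hφ : ∀ x y, hatAdj S b x y ↔ hatAdj S b (φ x) (φ y))
    (z w : G × A × B) (h : z.2 = w.2) : (φ z).2 = (φ w).2 := by
  have hφ' : ∀ x y, hatAdj S b x y ↔ hatAdj S b (φ.symm x) (φ.symm y) := fun x y => by
    rw [hφ (φ.symm x)]; simp
  have hinj : ∀ (p : A × B) (D : Finset (G × A × B)), (∀ x ∈ D, (φ.symm x).2 = p) →
      ∀ x ∈ D, ∀ y ∈ D, x.1 = y.1 → x = y := by
    intro p D hp x hx y hy hxy
    have := fst_of_card_lt hS1 hSsym hbb hBgen hA hlayer hblock hScard hlt hφ' x y hxy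
    exact φ.symm.injective (Prod.ext this ((hp x hx).trans (hp y hy).symm))
  refine snd_of_cosets hφ (fun p D _ _ hp h1 x hx y hy => hinj p D hp x hx y hy (h1 x hx y hy))
    (fun p D hD hcard hp ha x hx y hy => ?_) z w h
  by_contra huv
  have := (card_clique_GB hS1 hSsym hbb hlayer D hD ha hx hy huv).2.2 (hinj p D hp)
  omega

omit [Finite B] in
include hS1 hSsym hbb hA hlayer hScard in
/-- If `|G| > nk`, a clique of size `|G|` is too large for a coset of `AB`, and a clique in a coset
of `GB` meeting two layers has fewer than `|G|` vertices. -/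
lemma snd_of_lt_card (hn : 3 ≤ n) (hlt : n * k < Fintype.card G)
    {φ : (G × A × B) ≃ (G × A × B)}
    (hφ : ∀ x y, hatAdj S b x y ↔ hatAdj S b (φ x) (φ y))
    (z w : G × A × B) (h : z.2 = w.2) : (φ z).2 = (φ w).2 := by
  classical
  refine snd_of_cosets hφ (fun p D hD hcard _ h1 => ?_)
    (fun p D hD hcard hp ha x hx y hy => ?_) z w h
  · exfalso
    have h2 : D.card ≤ ((Finset.univ : Finset A) ×ˢ D.image (fun z => z.2.2)).card :=
      Finset.card_le_card_of_injOn (fun z => z.2)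
        (fun x hx => Finset.mem_coe.2 (Finset.mem_product.2
          ⟨Finset.mem_univ _, Finset.mem_image_of_mem _ hx⟩))
        (fun x hx y hy hxy => Prod.ext (h1 x hx y hy) hxy)
    rw [Finset.card_product, Finset.card_univ, hA] at h2
    have h3 := Nat.mul_le_mul_left n (card_image_layers_le hlayer hD)
    omega
  · by_contra huv
    have hc := card_clique_GB hS1 hSsym hbb hlayer D hD ha hx hy huv
    rcases Nat.lt_or_ge S.ncard 3 with h3 | h3
    · have : k * S.ncard ≤ n * k := by
        rw [mul_comm n]
        exact Nat.mul_le_mul_left _ (by omega)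
      omega
    · have := hc.2.1 h3
      omega

include hS1 hSsym hbb hBgen hA hlayer hblock hScard in
/-- If `|G| > nk`, the image of a block clique meets each coset of `G` at most once, so it would
have at most `k` vertices if it were contained in a coset of `GB`. -/
lemma fst_of_lt_card (hn : 3 ≤ n) (hk : 2 ≤ k) (hlt : n * k < Fintype.card G)
    {φ : (G × A × B) ≃ (G × A × B)}
    (hφ : ∀ x y, hatAdj S b x y ↔ hatAdj S b (φ x) (φ y))
    (z w : G × A × B) (h : z.1 = w.1) : (φ z).1 = (φ w).1 := by
  classical
  have hφ' : ∀ x y, hatAdj S b x y ↔ hatAdj S b (φ.symm x) (φ.symm y) := fun x y => by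
    rw [hφ (φ.symm x)]; simp
  refine fst_of_blocks hBgen hA hblock hφ (fun g D hD hcard hg ha => ?_) z w h
  have h2 : D.card ≤ (D.image (fun z => z.2.2)).card := by
    refine Finset.card_le_card_of_injOn (fun z => z.2.2)
      (fun x hx => Finset.mem_coe.2 (Finset.mem_image_of_mem _ hx)) (fun x hx y hy hxy => ?_)
    have := snd_of_lt_card hS1 hSsym hbb hA hlayer hScard hn hlt hφ' x y
      (Prod.ext (ha x hx y hy) hxy)
    exact φ.symm.injective (Prod.ext ((hg x hx).trans (hg y hy).symm) this)
  have h3 := card_image_layers_le hlayer hD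
  have h4 := Nat.mul_le_mul_right k hn
  omega

end Cases

end Automorphism

/-- If `φ` is an automorphism of `X̂` fixing `1`, `nk ≠ |G|`, and `|S| ≤ (|G|+1)/k`,
then `φ` maps each coset of `G` to a coset of `G`, and each coset of `AB` to a
coset of `AB`. -/
theorem phi_respects_cosets {G A B : Type*} [Group G] [Group A] [Group B] [Finite G]
    (S : Set G) (hS1 : (1 : G) ∈ S) (hSsym : S ≠ S⁻¹)
    (n : ℕ) (hn : 3 ≤ n) (k : ℕ) (hk : k = if 3 < n then 2 else 3)
    (hA : Nat.card A = n)
    (b : B) (hb : orderOf b = n) (hBgen : ∀ y : B, y ∈ Subgroup.zpowers b)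
    (φ : (G × A × B) ≃ (G × A × B))
    (hφ : ∀ x y, hatAdj S b x y ↔ hatAdj S b (φ x) (φ y))
    (h1 : φ 1 = 1)
    (hnk : n * k ≠ Nat.card G)
    (hScard : k * S.ncard ≤ Nat.card G + 1) :
    (∀ x : G × A × B, ∃ y : G × A × B,
        φ '' (Gset G A B * {x}) = Gset G A B * {y}) ∧
    (∀ x : G × A × B, ∃ y : G × A × B,
        φ '' (ABset G A B * {x}) = ABset G A B * {y}) := by
  classical
  have : Finite A := Nat.finite_of_card_ne_zero (by omega)
  have hB : Nat.card B = n := by rw [← orderOf_eq_card_of_forall_mem_zpowers hBgen, hb]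
  have : Finite B := Nat.finite_of_card_ne_zero (by omega)
  have : Fintype G := Fintype.ofFinite G
  have : Fintype A := Fintype.ofFinite A
  rw [Nat.card_eq_fintype_card] at hA hnk hScard
  have hbb : b * b ≠ 1 := by
    intro h
    have := orderOf_le_of_pow_eq_one (by norm_num) ((pow_two b).trans h)
    omega
  have hk2 : 2 ≤ k := by split_ifs at hk <;> omega
  have hlayer := card_layers_le hn hk hb hB
  have hblock := exists_layers hn hk hb hB hBgen
  have main : ∀ ψ : (G × A × B) ≃ (G × A × B),
      (∀ x y, hatAdj S b x y ↔ hatAdj S b (ψ x) (ψ y)) →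
      (∀ z w, z.2 = w.2 → (ψ z).2 = (ψ w).2) ∧ (∀ z w, z.1 = w.1 → (ψ z).1 = (ψ w).1) := by
    intro ψ hψ
    rcases Nat.lt_or_gt_of_ne hnk with hlt | hlt
    · exact ⟨snd_of_lt_card hS1 hSsym hbb hA hlayer hScard hn hlt hψ,
        fst_of_lt_card hS1 hSsym hbb hBgen hA hlayer hblock hScard hn hk2 hlt hψ⟩
    · exact ⟨snd_of_card_lt hS1 hSsym hbb hBgen hA hlayer hblock hScard hk2 hlt hψ,
        fst_of_card_lt hS1 hSsym hbb hBgen hA hlayer hblock hScard hlt hψ⟩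
  have m1 := main φ hφ
  have m2 := main φ.symm (fun x y => by rw [hφ (φ.symm x)]; simp)
  constructor
  · refine fun x => ⟨φ x, ?_⟩
    rw [Gset_mul_singleton, Gset_mul_singleton]
    ext z
    simp only [Set.mem_image, Set.mem_ofPred_eq]
    constructor
    · rintro ⟨w, hw, rfl⟩
      exact m1.1 _ _ hw
    · intro hz
      exact ⟨φ.symm z, by simpa using m2.1 _ _ hz, by simp⟩
  · refine fun x => ⟨φ x, ?_⟩
    rw [ABset_mul_singleton, ABset_mul_singleton]
    ext z
    simp only [Set.mem_image, Set.mem_ofPred_eq]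
    constructor
    · rintro ⟨w, hw, rfl⟩
      exact m1.2 _ _ hw
    · intro hz
      exact ⟨φ.symm z, by simpa using m2.2 _ _ hz, by simp⟩
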